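/- arXiv:1104.0195 — 5 statements merged into one kernel-verified Lean document; each statement's English description precedes it below -/
import Mathlib

section
/- For every closed term M of Λ⊕, if M ⇓div,n p and M ⇒n 𝒟, then p + Σ𝒟 ≤ 1. -/
open scoped ENNReal

/-- Terms of Λ⊕ (and of Λ⊕⁺), in de Bruijn notation: variables, abstractions,
applications and binary (probabilistic) sums.  De Bruijn indices realize
"terms up to renaming of bound variables". -/
inductive Term : Type
  | var : ℕ → Term
  | lam : Term → Term
  | app : Term → Term → Term
  | choice : Term → Term → Term
  deriving DecidableEq

namespace Term

/-- Values: variables and abstractions. -/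
inductive IsValue : Term → Prop
  | var (n : ℕ) : IsValue (var n)
  | lam (M : Term) : IsValue (lam M)

/-- Boolean value test. -/
def isVal : Term → Bool
  | var _ => true
  | lam _ => true
  | _ => false

/-- Shifting of de Bruijn indices: add `d` to all indices `≥ c`. -/
def shift (d c : ℕ) : Term → Term
  | var n => if n < c then var n else var (n + d)
  | lam M => lam (shift d (c + 1) M)
  | app M N => app (shift d c M) (shift d c N)
  | choice M N => choice (shift d c M) (shift d c N)

/-- Capture-avoiding substitution `M[j := N]` (the variable `j` is consumed and
higher indices are decremented, as in a β-step). -/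
def subst : Term → ℕ → Term → Term
  | var n, j, N => if n = j then shift j 0 N else if j < n then var (n - 1) else var n
  | lam M, j, N => lam (subst M (j + 1) N)
  | app M L, j, N => app (subst M j N) (subst L j N)
  | choice M L, j, N => choice (subst M j N) (subst L j N)

/-- All free indices are `< n`. -/
def closedUnder : Term → ℕ → Prop
  | var m, n => m < n
  | lam M, n => closedUnder M (n + 1)
  | app M N, n => closedUnder M n ∧ closedUnder N n
  | choice M N, n => closedUnder M n ∧ closedUnder N n

/-- Closed terms: no free variables. -/
def Closed (M : Term) : Prop := closedUnder M 0

end Term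

/-- (Sub)distributions are represented as functions from terms into `ℝ≥0∞`;
genuine distributions (`IsDist`) are supported on values and have mass `≤ 1`. -/
abbrev PDist := Term → ℝ≥0∞

/-- The sum (total mass) `Σ𝒟` of a distribution. -/
noncomputable def dsum (D : PDist) : ℝ≥0∞ := ∑' M, D M

/-- The support of a distribution. -/
def dsupp (D : PDist) : Set Term := {M | D M ≠ 0}

/-- The everywhere-zero distribution `∅`. -/
noncomputable def dzero : PDist := fun _ => 0

/-- The Dirac distribution `{V^1}`. -/
noncomputable def dirac (V : Term) : PDist := fun M => if M = V then 1 else 0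

/-- Being a genuine (sub)probability distribution: supported on values, with
total mass at most one. -/
def IsDist (D : PDist) : Prop := (∀ M, D M ≠ 0 → M.IsValue) ∧ dsum D ≤ 1

/-- Call-by-value reduction `↦v`, relating a term to the (equiprobable) finite
sequence of its possible reducts. -/
inductive RedV : Term → List Term → Prop
  | beta {M V : Term} : V.IsValue → RedV (.app (.lam M) V) [M.subst 0 V]
  | choice {V W : Term} : V.IsValue → W.IsValue → RedV (.choice V W) [V, W]
  | appL {M N : Term} {Ls : List Term} :
      RedV M Ls → RedV (.app M N) (Ls.map (fun L => .app L N))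
  | appR {V M : Term} {Ns : List Term} :
      V.IsValue → RedV M Ns → RedV (.app V M) (Ns.map (fun L => .app V L))
  | choiceL {M N : Term} {Ls : List Term} :
      RedV M Ls → RedV (.choice M N) (Ls.map (fun L => .choice L N))
  | choiceR {V M : Term} {Ns : List Term} :
      V.IsValue → RedV M Ns → RedV (.choice V M) (Ns.map (fun L => .choice V L))

/-- Call-by-name reduction `↦n`. -/
inductive RedN : Term → List Term → Prop
  | beta {M N : Term} : RedN (.app (.lam M) N) [M.subst 0 N]
  | choice {M N : Term} : RedN (.choice M N) [M, N]
  | appL {M N : Term} {Ls : List Term} :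
      RedN M Ls → RedN (.app M N) (Ls.map (fun L => .app L N))

/-- The inductive small-step convergence relation `⇒`, parametric in the
underlying reduction relation: any term evaluates to `∅`; a value `V`
evaluates to `{V^1}`; and if `M ↦ N₁,…,Nₙ` and `Nᵢ ⇒ 𝒟ᵢ` then
`M ⇒ Σᵢ (1/n)𝒟ᵢ`. -/
inductive Conv (Red : Term → List Term → Prop) : Term → PDist → Prop
  | bot (M : Term) : Conv Red M dzero
  | val {V : Term} : V.IsValue → Conv Red V (dirac V)
  | step {M : Term} {Ns : List Term} (Ds : Fin Ns.length → PDist) :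
      Red M Ns → (∀ i, Conv Red (Ns.get i) (Ds i)) →
      Conv Red M (fun W => (∑ i, Ds i W) / (Ns.length : ℝ≥0∞))

/-- Call-by-value small-step convergence `⇒v`. -/
def SmallV : Term → PDist → Prop := Conv RedV

/-- Call-by-name small-step convergence `⇒n`. -/
def SmallN : Term → PDist → Prop := Conv RedN

/-- The small-step semantics `⟦M⟧`: the pointwise supremum of all distributions
derivable for `M`. -/
noncomputable def semOf (S : Term → PDist → Prop) (M : Term) : PDist :=
  fun W => ⨆ (D : PDist) (_ : S M D), D W

/-- Call-by-value small-step semantics `⟦M⟧v`. -/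
noncomputable def semV : Term → PDist := semOf SmallV

/-- Call-by-name small-step semantics `⟦M⟧n`. -/
noncomputable def semN : Term → PDist := semOf SmallN

/-- One-step unfolding of the divergence inference system: a value diverges
with probability `0`; if `M ↦ N₁,…,Nₙ` and `Nᵢ` diverges with probability
`pᵢ`, then `M` diverges with probability `Σᵢ (1/n)pᵢ`. -/
def DivStep (Red : Term → List Term → Prop) (R : Term → ℝ≥0∞ → Prop)
    (M : Term) (p : ℝ≥0∞) : Prop :=
  (M.IsValue ∧ p = 0) ∨
    ∃ (Ns : List Term) (ps : Fin Ns.length → ℝ≥0∞),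
      Red M Ns ∧ (∀ i, R (Ns.get i) (ps i)) ∧ p = (∑ i, ps i) / (Ns.length : ℝ≥0∞)

/-- The coinductively-defined divergence relation `⇓div`: the union of all
consistent relations between terms and probabilities in `[0,1]`. -/
def Diverges (Red : Term → List Term → Prop) (M : Term) (p : ℝ≥0∞) : Prop :=
  ∃ R : Term → ℝ≥0∞ → Prop,
    (∀ N q, R N q → q ≤ 1 ∧ DivStep Red R N q) ∧ R M p

/-- Call-by-value divergence `⇓div`. -/
def DivV : Term → ℝ≥0∞ → Prop := Diverges RedV

/-- Call-by-name divergence `⇓div,n`. -/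
def DivN : Term → ℝ≥0∞ → Prop := Diverges RedN

/-- One-step unfolding of the call-by-value big-step inference system. -/
def BigVStep (R : Term → PDist → Prop) (M : Term) (D : PDist) : Prop :=
  (M.IsValue ∧ D = dirac M) ∨
  (∃ (N L : Term) (E F : PDist) (G : Term → Term → PDist),
      M = .app N L ∧ R N E ∧ R L F ∧
      (∀ P V, E (.lam P) ≠ 0 → V.IsValue → F V ≠ 0 → R (P.subst 0 V) (G P V)) ∧
      D = fun W => ∑' (P : Term), ∑' (V : Term), E (.lam P) * F V * G P V W) ∨
  (∃ (N L : Term) (E F : PDist),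
      M = .choice N L ∧ R N E ∧ R L F ∧
      D = fun W => (E W * dsum F + F W * dsum E) / 2)

/-- The coinductive call-by-value big-step relation `⇓v`: the union of all
consistent relations between terms and distributions. -/
def BigV (M : Term) (D : PDist) : Prop :=
  ∃ R : Term → PDist → Prop,
    (∀ N E, R N E → IsDist E ∧ BigVStep R N E) ∧ R M D

/-- One-step unfolding of the call-by-name big-step inference system. -/
def BigNStep (R : Term → PDist → Prop) (M : Term) (D : PDist) : Prop :=
  (M.IsValue ∧ D = dirac M) ∨
  (∃ (N L : Term) (E : PDist) (F : Term → PDist),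
      M = .app N L ∧ R N E ∧
      (∀ P, E (.lam P) ≠ 0 → R (P.subst 0 L) (F P)) ∧
      D = fun W => ∑' (P : Term), E (.lam P) * F P W) ∨
  (∃ (N L : Term) (E F : PDist),
      M = .choice N L ∧ R N E ∧ R L F ∧ D = fun W => (E W + F W) / 2)

/-- The coinductive call-by-name big-step relation `⇓n`. -/
def BigN (M : Term) (D : PDist) : Prop :=
  ∃ R : Term → PDist → Prop,
    (∀ N E, R N E → IsDist E ∧ BigNStep R N E) ∧ R M D

/-- Big-step semantics `⟪M⟫`: the pointwise infimum of all distributions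
derivable for `M` in a big-step system. -/
noncomputable def bigSemOf (B : Term → PDist → Prop) (M : Term) : PDist :=
  fun W => ⨅ (D : PDist) (_ : B M D), D W

/-!
Divergence is a fixed point of its own one-step unfolding, so it can be inverted at every step of a
convergence derivation. Convergence is inductive, and when `M ↦ N₁, …, Nₙ` is the only reduction of
`M`, the bound `p + Σ𝒟 ≤ 1` for `M` is the average of the bounds for the reducts. The convergence
derivation may be cut short by `M ⇒ ∅`, where what remains is `p ≤ 1`.
-/

theorem sum_div_card_le {ι : Type*} (s : Finset ι) (f : ι → ℝ≥0∞) {c : ℝ≥0∞}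
    (hf : ∀ i ∈ s, f i ≤ c) : (∑ i ∈ s, f i) / (s.card : ℝ≥0∞) ≤ c :=
  ENNReal.div_le_of_le_mul' <| (s.sum_le_card_nsmul f c hf).trans_eq (nsmul_eq_mul _ _)

theorem dsum_dzero : dsum dzero = 0 := by
  simp [dsum, dzero]

theorem dsum_dirac (V : Term) : dsum (dirac V) = 1 :=
  tsum_ite_eq V fun _ => 1

theorem dsum_sum_div {ι : Type*} (s : Finset ι) (Ds : ι → PDist) (c : ℝ≥0∞) :
    dsum (fun W => (∑ i ∈ s, Ds i W) / c) = (∑ i ∈ s, dsum (Ds i)) / c := by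
  simp only [dsum, div_eq_mul_inv]
  rw [ENNReal.tsum_mul_right, Summable.tsum_finsetSum fun _ _ => ENNReal.summable]

theorem RedN.not_isValue {M : Term} {Ns : List Term} (h : RedN M Ns) : ¬ M.IsValue := by
  rintro (_ | _) <;> cases h

theorem RedN.rightUnique : Relator.RightUnique RedN := by
  intro M Ns Ns' h h'
  induction h generalizing Ns' with
  | beta =>
    cases h' with
    | beta => rfl
    | appL hlam => exact absurd (.lam _) hlam.not_isValue
  | choice => cases h'; rfl
  | appL h ih =>
    cases h' with
    | beta => exact absurd (.lam _) h.not_isValue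
    | appL h' => rw [ih h']

section Diverges

variable {Red : Term → List Term → Prop}

theorem DivStep.mono {R S : Term → ℝ≥0∞ → Prop} (hRS : ∀ N q, R N q → S N q) {M : Term}
    {p : ℝ≥0∞} (h : DivStep Red R M p) : DivStep Red S M p :=
  h.imp_right fun ⟨Ns, ps, hred, hps, hp⟩ => ⟨Ns, ps, hred, fun i => hRS _ _ (hps i), hp⟩

theorem Diverges.le_one {M : Term} {p : ℝ≥0∞} : Diverges Red M p → p ≤ 1
  | ⟨_, hR, hp⟩ => (hR M p hp).1

theorem Diverges.divStep {M : Term} {p : ℝ≥0∞} :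
    Diverges Red M p → DivStep Red (Diverges Red) M p
  | ⟨R, hR, hp⟩ => (hR M p hp).2.mono fun _ _ hq => ⟨R, hR, hq⟩

theorem Diverges.eq_zero_of_isValue (hval : ∀ ⦃M Ns⦄, Red M Ns → ¬ M.IsValue) {V : Term}
    {p : ℝ≥0∞} (h : Diverges Red V p) (hV : V.IsValue) : p = 0 := by
  obtain ⟨-, hp⟩ | ⟨Ns, ps, hred, -⟩ := h.divStep
  · exact hp
  · exact absurd hV (hval hred)

theorem Diverges.exists_eq_sum_div_of_red (hdet : Relator.RightUnique Red)
    (hval : ∀ ⦃M Ns⦄, Red M Ns → ¬ M.IsValue) {M : Term} {Ns : List Term} {p : ℝ≥0∞}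
    (h : Diverges Red M p) (hred : Red M Ns) :
    ∃ ps : Fin Ns.length → ℝ≥0∞,
      (∀ i, Diverges Red (Ns.get i) (ps i)) ∧ p = (∑ i, ps i) / (Ns.length : ℝ≥0∞) := by
  obtain ⟨hM, -⟩ | ⟨Ns', ps, hred', hps, hp⟩ := h.divStep
  · exact absurd hM (hval hred)
  · obtain rfl := hdet hred hred'
    exact ⟨ps, hps, hp⟩

end Diverges

theorem divN_add_conv_le_one_general {Red : Term → List Term → Prop}
    (hdet : Relator.RightUnique Red) (hval : ∀ ⦃M Ns⦄, Red M Ns → ¬ M.IsValue)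
    {M : Term} {p : ℝ≥0∞} {D : PDist} (hdiv : Diverges Red M p) (hconv : Conv Red M D) :
    p + dsum D ≤ 1 := by
  induction hconv generalizing p with
  | bot => simpa only [dsum_dzero, add_zero] using hdiv.le_one
  | val hV => rw [hdiv.eq_zero_of_isValue hval hV, dsum_dirac, zero_add]
  | @step M Ns Ds hred _ ih =>
    obtain ⟨ps, hps, rfl⟩ := hdiv.exists_eq_sum_div_of_red hdet hval hred
    calc (∑ i, ps i) / (Ns.length : ℝ≥0∞) + dsum (fun W => (∑ i, Ds i W) / (Ns.length : ℝ≥0∞))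
        = (∑ i, (ps i + dsum (Ds i))) / (Ns.length : ℝ≥0∞) := by
          rw [dsum_sum_div, ← ENNReal.add_div, ← Finset.sum_add_distrib]
      _ ≤ 1 := by
          simpa only [Finset.card_fin] using
            sum_div_card_le Finset.univ _ fun i _ => ih i (hps i)

/-- divergence and convergence probabilities together never
exceed `1`, call-by-name. -/
theorem divN_add_conv_le_one (M : Term) (hM : M.Closed) (p : ℝ≥0∞) (D : PDist)
    (hdiv : DivN M p) (hconv : SmallN M D) :
    p + dsum D ≤ 1 :=
  divN_add_conv_le_one_general RedN.rightUnique (fun _ _ => RedN.not_isValue) hdiv hconv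
end

section
/- For every closed term M of Λ⊕, if M ⇒n 𝒟 and M ⇓n ℰ, then 𝒟 ≤ ℰ: every distribution derivable in the inductive call-by-name small-step semantics is dominated by every distribution derivable in the coinductive call-by-name big-step semantics. -/
open scoped ENNReal

/-! Big-step evaluation satisfies subject reduction: if `M ↦n N₁,…,Nₙ` and `M ⇓n ℰ`, then `ℰ` is the
average of distributions `ℰᵢ` with `Nᵢ ⇓n ℰᵢ`. For a reduction in head position this holds because
the big-step rule for applications is linear in the distribution of the head. Since a value
evaluates only to its Dirac distribution, induction on the *finite* small-step derivation then
compares the two semantics leaf by leaf; no coinductive argument about `ℰ` itself is needed. -/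

namespace PDist

/-- The uniform average `Σᵢ (1/n)𝒟ᵢ` of a finite family of distributions, which is the conclusion of
the small-step rule for reductions. The average of the empty family is `∅`. -/
noncomputable def average {n : ℕ} (Ds : Fin n → PDist) : PDist :=
  fun W => (∑ i, Ds i W) / (n : ℝ≥0∞)

/-- The distribution `Σ_{λx.P} ℰ(λx.P)·ℱ_P` of the big-step rule for applications. The family `F` is
indexed by the bodies `P`; mass that `E` gives to variables is lost. -/
noncomputable def lamBind (E : PDist) (F : Term → PDist) : PDist :=
  fun W => ∑' P : Term, E (.lam P) * F P W

theorem average_mono {n : ℕ} {Ds Es : Fin n → PDist} (h : ∀ i, Ds i ≤ Es i) :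
    average Ds ≤ average Es :=
  fun W => ENNReal.div_le_div_right (Finset.sum_le_sum fun i _ => h i W) _

theorem average_apply_eq_zero_iff {n : ℕ} {Ds : Fin n → PDist} {W : Term} :
    average Ds W = 0 ↔ ∀ i, Ds i W = 0 := by
  simp [average, ENNReal.div_eq_zero_iff]

theorem average_comp_cast {m n : ℕ} (h : m = n) (Ds : Fin n → PDist) :
    average (fun i => Ds (i.cast h)) = average Ds := by
  subst h
  rfl

theorem average_singleton (D : PDist) : average ![D] = D := by
  funext W
  simp [average]

theorem average_pair (D E : PDist) : average ![D, E] = fun W => (D W + E W) / 2 := by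
  funext W
  simp [average]

theorem lamBind_dirac_lam (P : Term) (F : Term → PDist) : lamBind (dirac (.lam P)) F = F P := by
  funext W
  rw [lamBind, tsum_eq_single P fun Q hQ => by simp [dirac, hQ]]
  simp [dirac]

theorem lamBind_average {n : ℕ} (Es : Fin n → PDist) (F : Term → PDist) :
    lamBind (average Es) F = average fun i => lamBind (Es i) F := by
  funext W
  calc ∑' P, (∑ i, Es i (.lam P)) / (n : ℝ≥0∞) * F P W
      = ∑' P, (∑ i, Es i (.lam P) * F P W) / (n : ℝ≥0∞) := by
        simp only [← Finset.sum_mul, ENNReal.mul_div_right_comm]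
    _ = (∑' P, ∑ i, Es i (.lam P) * F P W) / (n : ℝ≥0∞) := by
        simp only [div_eq_mul_inv, ENNReal.tsum_mul_right]
    _ = (∑ i, ∑' P, Es i (.lam P) * F P W) / (n : ℝ≥0∞) := by
        rw [Summable.tsum_finsetSum fun _ _ => ENNReal.summable]

theorem dsum_lamBind_le {E : PDist} {F : Term → PDist}
    (hF : ∀ P, E (.lam P) ≠ 0 → dsum (F P) ≤ 1) : dsum (lamBind E F) ≤ dsum E :=
  calc ∑' W, ∑' P, E (.lam P) * F P W
      = ∑' P, E (.lam P) * dsum (F P) := by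
        rw [ENNReal.tsum_comm]
        simp only [ENNReal.tsum_mul_left, dsum]
    _ ≤ ∑' P, E (.lam P) := by
        refine ENNReal.tsum_le_tsum fun P => ?_
        obtain hP | hP := eq_or_ne (E (.lam P)) 0
        · simp [hP]
        · exact mul_le_of_le_one_right' (hF P hP)
    _ ≤ ∑' W, E W := ENNReal.tsum_comp_le_tsum_of_injective (fun _ _ => Term.lam.inj) E

end PDist

open PDist

theorem IsDist.lamBind {E : PDist} {F : Term → PDist} (hE : IsDist E)
    (hF : ∀ P, E (.lam P) ≠ 0 → IsDist (F P)) : IsDist (lamBind E F) := by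
  refine ⟨fun W hW => ?_, (dsum_lamBind_le fun P hP => (hF P hP).2).trans hE.2⟩
  obtain ⟨P, hP⟩ : ∃ P, E (.lam P) * F P W ≠ 0 := by
    simpa [PDist.lamBind] using hW
  exact (hF P (left_ne_zero_of_mul hP)).1 W (right_ne_zero_of_mul hP)

/-- `D` is the uniform average of distributions that `B` relates, position by position, to the terms
of `Ns`. This is the premise pattern of the small-step rule for reductions, for an arbitrary
evaluation relation `B`. -/
def IsAverageOver (B : Term → PDist → Prop) (Ns : List Term) (D : PDist) : Prop :=
  ∃ Ds : Fin Ns.length → PDist, (∀ i, B (Ns.get i) (Ds i)) ∧ D = average Ds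

theorem IsAverageOver.singleton {B : Term → PDist → Prop} {N : Term} {D : PDist} (h : B N D) :
    IsAverageOver B [N] D :=
  ⟨![D], Fin.forall_fin_one.2 h, (average_singleton D).symm⟩

theorem IsAverageOver.pair {B : Term → PDist → Prop} {M N : Term} {D E : PDist}
    (hM : B M D) (hN : B N E) : IsAverageOver B [M, N] fun W => (D W + E W) / 2 :=
  ⟨![D, E], Fin.forall_fin_two.2 ⟨hM, hN⟩, (average_pair D E).symm⟩

theorem Conv.le_of_isAverageOver {Red : Term → List Term → Prop} {B : Term → PDist → Prop}
    (hval : ∀ V E, V.IsValue → B V E → dirac V ≤ E)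
    (hred : ∀ M Ns E, Red M Ns → B M E → IsAverageOver B Ns E)
    {M : Term} {D E : PDist} (hD : Conv Red M D) (hE : B M E) : D ≤ E := by
  induction hD generalizing E with
  | bot M => exact fun _ => zero_le
  | val hV => exact hval _ E hV hE
  | step Ds hM _ ih =>
    obtain ⟨Es, hEs, rfl⟩ := hred _ _ E hM hE
    exact average_mono fun i => ih i (hEs i)

theorem BigNStep.mono {R S : Term → PDist → Prop} (h : R ≤ S) {M : Term} {D : PDist} :
    BigNStep R M D → BigNStep S M D := by
  rintro (hval | ⟨N, L, E, F, hM, hN, hF, hD⟩ | ⟨N, L, E, F, hM, hN, hL, hD⟩)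
  · exact .inl hval
  · exact .inr (.inl ⟨N, L, E, F, hM, h _ _ hN, fun P hP => h _ _ (hF P hP), hD⟩)
  · exact .inr (.inr ⟨N, L, E, F, hM, h _ _ hN, h _ _ hL, hD⟩)

namespace BigN

variable {M N V : Term} {D E : PDist} {F : Term → PDist}

theorem isDist (h : BigN M D) : IsDist D :=
  let ⟨_, hR, hM⟩ := h
  (hR M D hM).1

theorem bigNStep (h : BigN M D) : BigNStep BigN M D :=
  let ⟨R, hR, hM⟩ := h
  (hR M D hM).2.mono fun _ _ hN => ⟨R, hR, hN⟩

theorem of_bigNStep (hD : IsDist D) (h : BigNStep BigN M D) : BigN M D :=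
  ⟨fun N E => IsDist E ∧ BigNStep BigN N E,
    fun _ _ hN => ⟨hN.1, hN.2.mono fun _ _ hL => ⟨hL.isDist, hL.bigNStep⟩⟩, hD, h⟩

theorem eq_dirac (hV : V.IsValue) (h : BigN V D) : D = dirac V := by
  obtain ⟨_, hD⟩ | ⟨_, _, _, _, rfl, _⟩ | ⟨_, _, _, _, rfl, _⟩ := h.bigNStep
  · exact hD
  all_goals cases hV

theorem exists_of_app (h : BigN (.app M N) D) :
    ∃ E F, BigN M E ∧ (∀ P, E (.lam P) ≠ 0 → BigN (P.subst 0 N) (F P)) ∧ D = lamBind E F := by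
  obtain ⟨⟨⟩, _⟩ | ⟨_, _, E, F, ⟨⟩, hM, hF, hD⟩ | ⟨_, _, _, _, ⟨⟩, _⟩ := h.bigNStep
  exact ⟨E, F, hM, hF, hD⟩

theorem exists_of_choice (h : BigN (.choice M N) D) :
    ∃ E F, BigN M E ∧ BigN N F ∧ D = fun W => (E W + F W) / 2 := by
  obtain ⟨⟨⟩, _⟩ | ⟨_, _, _, _, ⟨⟩, _⟩ | ⟨_, _, E, F, ⟨⟩, hM, hN, hD⟩ := h.bigNStep
  exact ⟨E, F, hM, hN, hD⟩

theorem app (hM : BigN M E) (hF : ∀ P, E (.lam P) ≠ 0 → BigN (P.subst 0 N) (F P)) :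
    BigN (.app M N) (lamBind E F) :=
  of_bigNStep (hM.isDist.lamBind fun P hP => (hF P hP).isDist)
    (.inr (.inl ⟨M, N, E, F, rfl, hM, hF, rfl⟩))

theorem isAverageOver_map_app {Ms : List Term} (hE : IsAverageOver BigN Ms E)
    (hF : ∀ P, E (.lam P) ≠ 0 → BigN (P.subst 0 N) (F P)) :
    IsAverageOver BigN (Ms.map fun M => .app M N) (lamBind E F) := by
  obtain ⟨Es, hEs, rfl⟩ := hE
  have hlen : (Ms.map fun M => Term.app M N).length = Ms.length := List.length_map _
  refine ⟨fun i => lamBind (Es (i.cast hlen)) F, fun i => ?_, ?_⟩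
  · have happ : BigN (.app (Ms.get (i.cast hlen)) N) (lamBind (Es (i.cast hlen)) F) :=
      (hEs _).app fun P hP => hF P fun h0 => hP (average_apply_eq_zero_iff.1 h0 _)
    simpa using happ
  · rw [lamBind_average, average_comp_cast hlen fun i => lamBind (Es i) F]

theorem isAverageOver_of_redN {Ns : List Term} (hM : RedN M Ns) (h : BigN M D) :
    IsAverageOver BigN Ns D := by
  induction hM generalizing D with
  | @beta P N =>
    obtain ⟨E, F, hE, hF, rfl⟩ := h.exists_of_app
    obtain rfl : E = dirac (.lam P) := hE.eq_dirac (.lam P)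
    rw [lamBind_dirac_lam]
    exact .singleton (hF P (by simp [dirac]))
  | choice =>
    obtain ⟨E, F, hE, hF, rfl⟩ := h.exists_of_choice
    exact .pair hE hF
  | appL _ ih =>
    obtain ⟨E, F, hE, hF, rfl⟩ := h.exists_of_app
    exact isAverageOver_map_app (ih hE) hF

end BigN

theorem bigN_dominates_smallN_general {M : Term} {D E : PDist} (hsmall : SmallN M D)
    (hbig : BigN M E) : D ≤ E :=
  hsmall.le_of_isAverageOver (fun _ _ hV hE => (hE.eq_dirac hV).ge)
    (fun _ _ _ hM hE => hE.isAverageOver_of_redN hM) hbig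

/-- big-step dominates small-step, call-by-name. -/
theorem bigN_dominates_smallN (M : Term) (hM : M.Closed) (D E : PDist)
    (hsmall : SmallN M D) (hbig : BigN M E) :
    D ≤ E :=
  bigN_dominates_smallN_general hsmall hbig
end

section
/- For every closed term M of Λ⊕, the judgment M ⇓n ⟦M⟧n holds: the call-by-name small-step semantics of M is itself derivable in the coinductive call-by-name big-step semantics. -/
open scoped ENNReal

/-! The relation relating every term `N` to `⟦N⟧n` alone is closed under the big-step rules, so that
coinduction applies. The rule at stake is `⟦N L⟧n = Σ_P ⟦N⟧n(λP) · ⟦P[L]⟧n`. Both inequalities come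
from one induction principle: for a strategy, `M ↦ Σ_V ⟦M⟧(V) · c(V)` is the least function on terms
which is at least `c` on values and at least the mean of its values on the reducts elsewhere. -/

open Function

section Sums

variable {α ι : Type*}

theorem tsum_mul_extend {g : ι → α} (hg : g.Injective) (f : α → ℝ≥0∞) (k : ι → ℝ≥0∞) :
    ∑' a, f a * extend g k 0 a = ∑' i, f (g i) * k i := by
  rw [← hg.tsum_eq]
  · simp only [hg.extend_apply]
  · refine support_subset_iff'.2 fun a ha => ?_
    rw [extend_apply' _ _ _ ha, Pi.zero_apply, mul_zero]

theorem tsum_sum_div_mul [Fintype ι] (f : ι → α → ℝ≥0∞) (r : ℝ≥0∞) (c : α → ℝ≥0∞) :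
    ∑' a, (∑ i, f i a) / r * c a = (∑ i, ∑' a, f i a * c a) / r := by
  rw [← Summable.tsum_finsetSum fun _ _ => ENNReal.summable, div_eq_mul_inv,
    ← ENNReal.tsum_mul_right]
  refine tsum_congr fun a => ?_
  rw [← Finset.sum_mul, div_eq_mul_inv, mul_right_comm]

theorem tsum_iSup_of_directed {f : ι → α → ℝ≥0∞} (hf : Directed (· ≤ ·) f) :
    ∑' a, ⨆ i, f i a = ⨆ i, ∑' a, f i a := by
  have sum_iSup (s : Finset α) : ∑ a ∈ s, ⨆ i, f i a = ⨆ i, ∑ a ∈ s, f i a :=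
    ENNReal.finsetSum_iSup fun i j =>
      (hf i j).imp fun _ ⟨hi, hj⟩ a => ⟨hi a, hj a⟩
  simp only [ENNReal.tsum_eq_iSup_sum, sum_iSup]
  exact iSup_comm

theorem sum_iSup_eq_iSup_pi [Fintype ι] {κ : ι → Type*} [∀ i, Nonempty (κ i)]
    (f : ∀ i, κ i → ℝ≥0∞) : ∑ i, ⨆ j, f i j = ⨆ k : ∀ i, κ i, ∑ i, f i (k i) := by
  have iSup_eval (i : ι) : ⨆ j, f i j = ⨆ k : ∀ i, κ i, f i (k i) :=
    ((surjective_eval i).iSup_comp (f i)).symm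
  simp only [iSup_eval]
  refine ENNReal.finsetSum_iSup fun k l => ?_
  have exists_max (i : ι) : ∃ j, f i (k i) ≤ f i j ∧ f i (l i) ≤ f i j :=
    (le_total (f i (k i)) (f i (l i))).elim (fun h => ⟨l i, h, le_rfl⟩) fun h => ⟨k i, le_rfl, h⟩
  choose m hm using exists_max
  exact ⟨m, hm⟩

end Sums

section Mean

variable {α β : Type*}

/-- The mean `(f a₁ + ⋯ + f aₙ) / n` of `f` over a sequence of equiprobable outcomes `a₁, …, aₙ`;
it is `0 / 0 = 0` for the empty sequence. -/
noncomputable def mean (l : List α) (f : α → ℝ≥0∞) : ℝ≥0∞ := (l.map f).sum / l.length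

theorem mean_eq_sum_get (l : List α) (f : α → ℝ≥0∞) :
    mean l f = (∑ i, f (l.get i)) / l.length := by
  simp [mean, ← Fin.sum_univ_fun_getElem]

theorem mean_singleton (a : α) (f : α → ℝ≥0∞) : mean [a] f = f a := by simp [mean]

theorem mean_pair (a b : α) (f : α → ℝ≥0∞) : mean [a, b] f = (f a + f b) / 2 := by simp [mean]

theorem mean_map (l : List β) (g : β → α) (f : α → ℝ≥0∞) :
    mean (l.map g) f = mean l fun b => f (g b) := by
  simp [mean, comp_def]

theorem mean_const_le (l : List α) (r : ℝ≥0∞) : mean l (fun _ => r) ≤ r := by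
  simpa [mean] using ENNReal.div_le_of_le_mul' (le_refl (l.length * r))

theorem mean_mono (l : List α) {f g : α → ℝ≥0∞} (h : f ≤ g) : mean l f ≤ mean l g :=
  ENNReal.div_le_div_right (List.sum_le_sum fun a _ => h a) _

theorem tsum_mean_mul (l : List β) (f : β → α → ℝ≥0∞) (c : α → ℝ≥0∞) :
    ∑' a, mean l (fun b => f b a) * c a = mean l fun b => ∑' a, f b a * c a := by
  simp only [mean_eq_sum_get]
  exact tsum_sum_div_mul (fun i => f (l.get i)) _ c

end Mean

theorem tsum_dirac_mul (V : Term) (c : Term → ℝ≥0∞) : ∑' W, dirac V W * c W = c V := by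
  simp [dirac]

/-- A reduction strategy: values are irreducible, and every term has at most one sequence of
equiprobable reducts. -/
structure IsStrategy (Red : Term → List Term → Prop) : Prop where
  irreducible : ∀ {V Ns}, V.IsValue → ¬ Red V Ns
  rightUnique : Relator.RightUnique Red

section SmallStep

variable {Red : Term → List Term → Prop} {M V W : Term} {Ns : List Term} {D : PDist}

theorem semOf_apply (S : Term → PDist → Prop) (M W : Term) :
    semOf S M W = ⨆ D : {D // S M D}, D.1 W :=
  iSup_subtype'

instance nonempty_conv : Nonempty {D // Conv Red M D} := ⟨⟨dzero, .bot M⟩⟩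

theorem Conv.tsum_mul_le {c F : Term → ℝ≥0∞} (hval : ∀ V : Term, V.IsValue → c V ≤ F V)
    (hstep : ∀ M Ns, Red M Ns → mean Ns F ≤ F M) (h : Conv Red M D) :
    ∑' V, D V * c V ≤ F M := by
  induction h with
  | bot => simp [dzero]
  | @val V hV => exact (tsum_dirac_mul V c).trans_le (hval V hV)
  | @step M Ns Ds hred _ ih =>
    calc ∑' V, (∑ i, Ds i V) / (Ns.length : ℝ≥0∞) * c V
      _ = (∑ i, ∑' V, Ds i V * c V) / Ns.length := tsum_sum_div_mul Ds _ c
      _ ≤ (∑ i, F (Ns.get i)) / Ns.length :=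
        ENNReal.div_le_div_right (Finset.sum_le_sum fun i _ => ih i) _
      _ = mean Ns F := (mean_eq_sum_get Ns F).symm
      _ ≤ F M := hstep M Ns hred

theorem semOf_conv_le {F : Term → ℝ≥0∞} (hval : ∀ V : Term, V.IsValue → dirac V W ≤ F V)
    (hstep : ∀ M Ns, Red M Ns → mean Ns F ≤ F M) (M : Term) :
    semOf (Conv Red) M W ≤ F M := by
  refine iSup₂_le fun D hD => ?_
  simpa [dirac, eq_comm] using hD.tsum_mul_le hval hstep

theorem IsStrategy.directed_conv (hRed : IsStrategy Red) (M : Term) :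
    Directed (· ≤ ·) fun D : {D // Conv Red M D} => D.1 := by
  suffices exists_ge_ge : ∀ {D}, Conv Red M D → ∀ {D'}, Conv Red M D' →
      ∃ E, Conv Red M E ∧ D ≤ E ∧ D' ≤ E by
    rintro ⟨D, hD⟩ ⟨D', hD'⟩
    obtain ⟨E, hE, hle⟩ := exists_ge_ge hD hD'
    exact ⟨⟨E, hE⟩, hle⟩
  intro D hD
  have dzero_le (E : PDist) : dzero ≤ E := fun _ => zero_le
  induction hD with
  | bot M => exact fun {D'} hD' => ⟨D', hD', dzero_le D', le_rfl⟩
  | @val V hV =>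
    intro D' hD'
    refine ⟨dirac V, .val hV, le_rfl, ?_⟩
    cases hD' with
    | bot => exact dzero_le _
    | val => exact le_rfl
    | step _ hred => exact (hRed.irreducible hV hred).elim
  | @step M Ns Ds hred hDs ih =>
    intro D' hD'
    cases hD' with
    | bot => exact ⟨_, .step Ds hred hDs, le_rfl, dzero_le _⟩
    | val hV => exact (hRed.irreducible hV hred).elim
    | step Ds' hred' hDs' =>
      obtain rfl := hRed.rightUnique hred hred'
      choose Es hEs hle hle' using fun i => ih i (hDs' i)
      exact ⟨_, .step Es hred hEs,
        fun W => ENNReal.div_le_div_right (Finset.sum_le_sum fun i _ => hle i W) _,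
        fun W => ENNReal.div_le_div_right (Finset.sum_le_sum fun i _ => hle' i W) _⟩

theorem IsStrategy.tsum_semOf_mul (hRed : IsStrategy Red) (M : Term) (c : Term → ℝ≥0∞) :
    ∑' V, semOf (Conv Red) M V * c V = ⨆ D : {D // Conv Red M D}, ∑' V, D.1 V * c V := by
  simp only [semOf_apply, ENNReal.iSup_mul]
  exact tsum_iSup_of_directed fun D D' =>
    (hRed.directed_conv M D D').imp fun _ ⟨hle, hle'⟩ =>
      ⟨fun V => mul_le_mul_left (hle V) (c V), fun V => mul_le_mul_left (hle' V) (c V)⟩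

theorem IsStrategy.tsum_semOf_mul_le (hRed : IsStrategy Red) {c F : Term → ℝ≥0∞}
    (hval : ∀ V : Term, V.IsValue → c V ≤ F V)
    (hstep : ∀ M Ns, Red M Ns → mean Ns F ≤ F M) (M : Term) :
    ∑' V, semOf (Conv Red) M V * c V ≤ F M :=
  (hRed.tsum_semOf_mul M c).trans_le <| iSup_le fun D => D.2.tsum_mul_le hval hstep

theorem isValue_of_semOf_conv_ne_zero (hW : semOf (Conv Red) M W ≠ 0) : W.IsValue := by
  contrapose! hW
  refine nonpos_iff_eq_zero.1 (semOf_conv_le (fun V hV => ?_) (fun _ Ns _ => mean_const_le Ns 0) M)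
  rw [dirac, if_neg fun h : W = V => hW (h ▸ hV)]

theorem IsStrategy.isDist_semOf (hRed : IsStrategy Red) (M : Term) :
    IsDist (semOf (Conv Red) M) := by
  refine ⟨fun _ => isValue_of_semOf_conv_ne_zero, ?_⟩
  simpa only [dsum, mul_one] using hRed.tsum_semOf_mul_le (c := fun _ => 1) (F := fun _ => 1)
    (fun _ _ => le_rfl) (fun _ Ns _ => mean_const_le Ns 1) M

theorem IsStrategy.semOf_value (hRed : IsStrategy Red) (hV : V.IsValue) :
    semOf (Conv Red) V = dirac V := by
  funext W
  refine le_antisymm (iSup₂_le fun D hD => ?_) (le_iSup₂_of_le _ (.val hV) le_rfl)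
  cases hD with
  | bot => exact zero_le
  | val => exact le_rfl
  | step _ hred => exact (hRed.irreducible hV hred).elim

theorem IsStrategy.semOf_step (hRed : IsStrategy Red) (hred : Red M Ns) (W : Term) :
    semOf (Conv Red) M W = mean Ns fun N => semOf (Conv Red) N W := by
  rw [mean_eq_sum_get]
  simp only [semOf_apply]
  rw [sum_iSup_eq_iSup_pi fun i (D : {D // Conv Red (Ns.get i) D}) => D.1 W, ENNReal.iSup_div]
  refine le_antisymm (iSup_le ?_) (iSup_le fun Ds => ?_)
  · rintro ⟨D, hD⟩
    cases hD with
    | bot => exact zero_le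
    | val hV => exact (hRed.irreducible hV hred).elim
    | step Ds hred' hDs =>
      obtain rfl := hRed.rightUnique hred hred'
      exact le_iSup_of_le (fun i => ⟨Ds i, hDs i⟩) le_rfl
  · exact le_iSup_of_le ⟨_, .step (fun i => (Ds i).1) hred fun i => (Ds i).2⟩ le_rfl

end SmallStep

section CallByName

theorem isStrategy_redN : IsStrategy RedN where
  irreducible hV hred := by cases hV <;> cases hred
  rightUnique M Ns Ns' hred hred' := by
    induction hred generalizing Ns' with
    | beta =>
      cases hred' with
      | beta => rfl
      | appL hlam => cases hlam
    | choice => cases hred'; rfl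
    | appL hred ih =>
      cases hred' with
      | beta => cases hred
      | appL hred' => rw [ih _ hred']

theorem semN_value {V : Term} (hV : V.IsValue) : semN V = dirac V :=
  isStrategy_redN.semOf_value hV

theorem semN_step {M : Term} {Ns : List Term} (hred : RedN M Ns) (W : Term) :
    semN M W = mean Ns fun N => semN N W :=
  isStrategy_redN.semOf_step hred W

theorem semN_beta (P L W : Term) : semN (.app (.lam P) L) W = semN (P.subst 0 L) W :=
  (semN_step .beta W).trans (mean_singleton _ _)

theorem semN_choice (N L W : Term) : semN (.choice N L) W = (semN N W + semN L W) / 2 :=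
  (semN_step .choice W).trans (mean_pair _ _ _)

theorem semN_appL {N : Term} {Ns : List Term} (hred : RedN N Ns) (L W : Term) :
    semN (.app N L) W = mean Ns fun N' => semN (.app N' L) W :=
  (semN_step hred.appL W).trans (mean_map _ _ _)

/-- The distribution that the big-step rule for `M` assigns to `M` when its premises are evaluated
by the small-step semantics. -/
noncomputable def bigStepSemN : Term → PDist
  | .app N L => fun W => ∑' P, semN N (.lam P) * semN (P.subst 0 L) W
  | .choice N L => fun W => (semN N W + semN L W) / 2
  | V => dirac V

theorem bigStepSemN_value {V : Term} (hV : V.IsValue) : bigStepSemN V = dirac V := by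
  cases hV <;> rfl

theorem tsum_semN_lam_mul_le (N L W : Term) :
    ∑' P, semN N (.lam P) * semN (P.subst 0 L) W ≤ semN (.app N L) W := by
  have lam_injective : Injective Term.lam := fun _ _ => Term.lam.inj
  rw [← tsum_mul_extend lam_injective]
  refine isStrategy_redN.tsum_semOf_mul_le (F := fun N => semN (.app N L) W) ?_ ?_ N
  · rintro _ (n | P)
    · rw [extend_apply' _ _ _ (by simp)]
      exact zero_le
    · rw [lam_injective.extend_apply, semN_beta]
  · exact fun N Ns hred => (semN_appL hred L W).ge

theorem bigStepSemN_le_semN (M : Term) : bigStepSemN M ≤ semN M := by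
  intro W
  cases M with
  | var n => exact (congrFun (semN_value (.var n)) W).ge
  | lam P => exact (congrFun (semN_value (.lam P)) W).ge
  | app N L => exact tsum_semN_lam_mul_le N L W
  | choice N L => exact (semN_choice N L W).ge

theorem mean_bigStepSemN_le {M : Term} {Ns : List Term} (hred : RedN M Ns) (W : Term) :
    mean Ns (fun N => bigStepSemN N W) ≤ bigStepSemN M W := by
  induction hred with
  | @beta P L =>
    calc mean [P.subst 0 L] (fun N => bigStepSemN N W)
      _ = bigStepSemN (P.subst 0 L) W := mean_singleton _ _
      _ ≤ semN (P.subst 0 L) W := bigStepSemN_le_semN _ W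
      _ = semN (.lam P) (.lam P) * semN (P.subst 0 L) W := by
        rw [semN_value (.lam P), dirac, if_pos rfl, one_mul]
      _ ≤ bigStepSemN (.app (.lam P) L) W :=
        ENNReal.le_tsum (f := fun Q => semN (.lam P) (.lam Q) * semN (Q.subst 0 L) W) P
  | @choice N L =>
    exact (mean_mono _ fun N => bigStepSemN_le_semN N W).trans_eq (mean_pair N L _)
  | @appL N L Ns hred =>
    rw [mean_map]
    simp only [bigStepSemN, semN_step hred]
    exact (tsum_mean_mul Ns (fun N P => semN N (.lam P)) _).ge

theorem semN_eq_bigStepSemN (M : Term) : semN M = bigStepSemN M := by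
  refine le_antisymm (fun W => ?_) (bigStepSemN_le_semN M)
  exact semOf_conv_le (F := fun N => bigStepSemN N W)
    (fun V hV => (congrFun (bigStepSemN_value hV) W).ge)
    (fun _ _ hred => mean_bigStepSemN_le hred W) M

theorem bigN_semN_general (M : Term) : BigN M (semN M) := by
  refine ⟨fun N E => E = semN N, ?_, rfl⟩
  rintro N _ rfl
  refine ⟨isStrategy_redN.isDist_semOf N, ?_⟩
  have unfold_semN := semN_eq_bigStepSemN N
  cases N with
  | var n => exact .inl ⟨.var n, unfold_semN⟩
  | lam P => exact .inl ⟨.lam P, unfold_semN⟩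
  | app N L =>
    exact .inr <| .inl
      ⟨N, L, semN N, fun P => semN (P.subst 0 L), rfl, rfl, fun _ _ => rfl, unfold_semN⟩
  | choice N L => exact .inr <| .inr ⟨N, L, semN N, semN L, rfl, rfl, rfl, unfold_semN⟩

end CallByName

/-- the call-by-name small-step semantics of `M` is itself
derivable in the coinductive call-by-name big-step semantics. -/
theorem bigN_semN (M : Term) (hM : M.Closed) :
    BigN M (semN M) :=
  bigN_semN_general M
end

section
/- For every term M of Λ⊕, every value V and every variable x, the call-by-value CPS translation commutes with substitution: ⟨M⟩[Ψ(V)/x] = ⟨M[V/x]⟩. -/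
open scoped ENNReal

open Term in
/-- The call-by-value CPS translation `⟨·⟩` of Plotkin, extended to binary
choice (de Bruijn version; the continuation variables `ε, α, β, γ` of `Λ⊕⁺`
are rendered as the extra binders introduced by the translation). -/
def cps : Term → Term
  | .var n => .lam (.app (.var 0) (.var (n + 1)))
  | .lam M => .lam (.app (.var 0) (.lam (shift 1 1 (cps M))))
  | .app M N =>
      .lam (.app (shift 1 0 (cps M))
        (.lam (.app (shift 2 0 (cps N))
          (.lam (.app (.app (.var 1) (.var 0)) (.var 2))))))
  | .choice M N =>
      .lam (.app (shift 1 0 (cps M))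
        (.lam (.app (shift 2 0 (cps N))
          (.lam (.app
            (.choice (.lam (.app (.var 0) (.var 2))) (.lam (.app (.var 0) (.var 1))))
            (.var 2))))))

/-- The map `Ψ` on values: `Ψ(x) = x`, `Ψ(λx.M) = λx.⟨M⟩` (extended
structurally to all terms). -/
def psi : Term → Term
  | .var n => .var n
  | .lam M => .lam (cps M)
  | .app M N => .app (psi M) (psi N)
  | .choice M N => .choice (psi M) (psi N)

/-- The pushforward of a distribution along `Ψ`: `Ψ(𝒟)(W) = Σ_{V : Ψ(V)=W} 𝒟(V)`. -/
noncomputable def pushPsi (D : PDist) : PDist :=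
  fun W => ∑' V : Term, if psi V = W then D V else 0

open Term in
/-- The call-by-name CPS translation `⌈·⌉` (de Bruijn version). -/
def cpn : Term → Term
  | .var n => .var n
  | .lam M => .lam (.app (.var 0) (.lam (shift 1 1 (cpn M))))
  | .app M N =>
      .lam (.app (shift 1 0 (cpn M))
        (.lam (.app (.app (.var 0) (shift 2 0 (cpn N))) (.var 1))))
  | .choice M N =>
      .lam (.app
        (.choice (.lam (.app (shift 2 0 (cpn M)) (.var 0)))
                 (.lam (.app (shift 2 0 (cpn N)) (.var 0))))
        (.var 0))

/-- The map `Φ` on values: `Φ(x) = x(λy.y)`, `Φ(λx.M) = λx.⌈M⌉` (extended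
structurally to all terms). -/
def phi : Term → Term
  | .var n => .app (.var n) (.lam (.var 0))
  | .lam M => .lam (cpn M)
  | .app M N => .app (phi M) (phi N)
  | .choice M N => .choice (phi M) (phi N)

/-- The pushforward of a distribution along `Φ`. -/
noncomputable def pushPhi (D : PDist) : PDist :=
  fun W => ∑' V : Term, if phi V = W then D V else 0

open Term in
/-- Plotkin's infix operator `M : K` for the call-by-value CPS translation,
extended to binary choice. -/
def colonV : Term → Term → Term
  | .var n, K => .app K (psi (.var n))
  | .lam M, K => .app K (psi (.lam M))
  | .app L P, K =>
      if L.isVal then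
        if P.isVal then .app (.app (psi L) (psi P)) K
        else colonV P (.lam (.app (.app (shift 1 0 (psi L)) (.var 0)) (shift 1 0 K)))
      else
        colonV L (.lam (.app (shift 1 0 (cps P))
          (.lam (.app (.app (.var 1) (.var 0)) (shift 2 0 K)))))
  | .choice L P, K =>
      if L.isVal then
        if P.isVal then
          .app (.choice (.lam (.app (.var 0) (shift 1 0 (psi L))))
                        (.lam (.app (.var 0) (shift 1 0 (psi P))))) K
        else
          colonV P (.lam (.app
            (.choice (.lam (.app (.var 0) (shift 2 0 (psi L))))
                     (.lam (.app (.var 0) (.var 1))))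
            (shift 1 0 K)))
      else
        colonV L (.lam (.app (shift 1 0 (cps P))
          (.lam (.app
            (.choice (.lam (.app (.var 0) (.var 2))) (.lam (.app (.var 0) (.var 1))))
            (shift 2 0 K)))))

/-- A deterministic reduction step: a reduction whose right-hand side is a
one-element sequence. -/
def DetStepN (M N : Term) : Prop := RedN M [N]

/-- Scott numerals: `⌜0⌝ = λxy.x`, `⌜n+1⌝ = λxy.y⌜n⌝`. -/
def scott : ℕ → Term
  | 0 => .lam (.lam (.var 1))
  | n + 1 => .lam (.lam (.app (.var 0) (scott n)))

/-- The binary string (of length `n`) made of the first `n` digits of the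
binary expansion of `x ∈ [0,1]`. -/
noncomputable def binApprox (x : ℝ≥0∞) (n : ℕ) : List Bool :=
  (List.range n).map (fun i => decide (⌊x.toReal * 2 ^ (i + 1)⌋ % 2 = 1))

/-- A distribution `D : ℕ → [0,1]` is computable when its approximating
function `(a, n) ↦` first `n` binary digits of `D a` is computable. -/
def ComputableDist (D : ℕ → ℝ≥0∞) : Prop :=
  Computable fun p : ℕ × ℕ => binApprox (D p.1) p.2

/-!
The translation only builds terms of two shapes: `λε. ε W` (`Term.cpsReturn`) on variables and
abstractions, and `λε. M (λα. N (λβ. B))` (`Term.cpsSeq`) on applications and sums. Since the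
continuation binders are fresh, shifting and substitution pass through both shapes, so the
translation commutes with shifting, and the induction for substitution reduces to variables.
There `⟨x⟩[Ψ(V)/x] = λε. ε Ψ(V)`, which is `⟨V⟩` exactly because `V` is a value.
-/

namespace Term

theorem shift_var_of_lt {n c : ℕ} (h : n < c) (d : ℕ) : (var n).shift d c = var n :=
  if_pos h

theorem shift_var_of_le {n c : ℕ} (h : c ≤ n) (d : ℕ) : (var n).shift d c = var (n + d) :=
  if_neg h.not_gt

theorem shift_comm (M : Term) (d d' : ℕ) {c c' : ℕ} (h : c ≤ c') :
    (M.shift d' c).shift d (c' + d') = (M.shift d c').shift d' c := by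
  induction M generalizing c c' with
  | var n => grind [shift]
  | lam M ih => simp only [shift, Nat.add_right_comm c' d' 1, ih (Nat.succ_le_succ h)]
  | app M N ihM ihN => simp only [shift, ihM h, ihN h]
  | choice M N ihM ihN => simp only [shift, ihM h, ihN h]

theorem shift_shift (M : Term) (d : ℕ) {d' c c' : ℕ} (h : c ≤ c') (h' : c' ≤ c + d') :
    (M.shift d' c).shift d c' = M.shift (d' + d) c := by
  induction M generalizing c c' with
  | var n => grind [shift]
  | lam M ih => simp only [shift, ih (Nat.succ_le_succ h) (by omega)]
  | app M N ihM ihN => simp only [shift, ihM h h', ihN h h']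
  | choice M N ihM ihN => simp only [shift, ihM h h', ihN h h']

theorem subst_var_self (j : ℕ) (N : Term) : (var j).subst j N = N.shift j 0 :=
  if_pos rfl

theorem subst_var_of_lt {n j : ℕ} (h : n < j) (N : Term) : (var n).subst j N = var n := by
  simp [subst, h.ne, h.not_gt]

theorem subst_var_of_gt {n j : ℕ} (h : j < n) (N : Term) :
    (var n).subst j N = var (n - 1) := by
  simp [subst, h.ne', h]

theorem subst_shift (M N : Term) (d : ℕ) {c j : ℕ} (h : c ≤ j) :
    (M.shift d c).subst (j + d) N = (M.subst j N).shift d c := by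
  induction M generalizing c j with
  | var n =>
    rcases lt_trichotomy n j with hn | rfl | hn
    · rw [subst_var_of_lt hn]
      rcases lt_or_ge n c with hc | hc
      · rw [shift_var_of_lt hc, subst_var_of_lt (by omega)]
      · rw [shift_var_of_le hc, subst_var_of_lt (by omega)]
    · rw [shift_var_of_le h, subst_var_self, subst_var_self,
        shift_shift N d c.zero_le (by omega)]
    · rw [shift_var_of_le (by omega), subst_var_of_gt (by omega), subst_var_of_gt hn,
        shift_var_of_le (by omega), Nat.sub_add_comm (by omega)]
  | lam M ih => simp only [shift, subst, Nat.add_right_comm j d 1, ih (Nat.succ_le_succ h)]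
  | app M L ihM ihL => simp only [shift, subst, ihM h, ihL h]
  | choice M L ihM ihL => simp only [shift, subst, ihM h, ihL h]

/-- The term `λε. ε W`, which passes the result `W` to the continuation; it is the shape of the
CPS translation of a value. -/
def cpsReturn (W : Term) : Term :=
  lam (app (var 0) (W.shift 1 0))

/-- The term `λε. M (λα. N (λβ. B))`, which runs `M`, then `N`, then `B`; it is the common shape
of the CPS translations of applications and sums. Inside `B` the indices `2`, `1`, `0` stand for
`ε`, `α`, `β`, whereas `M` and `N` do not see the binders. -/
def cpsSeq (M N B : Term) : Term :=
  lam (app (M.shift 1 0) (lam (app (N.shift 2 0) (lam B))))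

theorem shift_cpsReturn (W : Term) (d c : ℕ) :
    (cpsReturn W).shift d c = cpsReturn (W.shift d c) := by
  simp [cpsReturn, shift, shift_comm W d 1 c.zero_le]

theorem subst_cpsReturn (W N : Term) (j : ℕ) :
    (cpsReturn W).subst j N = cpsReturn (W.subst j N) := by
  simp [cpsReturn, subst, subst_shift W N 1 j.zero_le]

theorem shift_cpsSeq (M N B : Term) (d c : ℕ) :
    (cpsSeq M N B).shift d c = cpsSeq (M.shift d c) (N.shift d c) (B.shift d (c + 3)) := by
  simp [cpsSeq, shift, shift_comm M d 1 c.zero_le, shift_comm N d 2 c.zero_le]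

theorem subst_cpsSeq (M N B L : Term) (j : ℕ) :
    (cpsSeq M N B).subst j L = cpsSeq (M.subst j L) (N.subst j L) (B.subst (j + 3) L) := by
  simp [cpsSeq, subst, subst_shift M L 1 j.zero_le, subst_shift N L 2 j.zero_le]

end Term

section CPS

open Term

theorem cps_eq_cpsReturn {V : Term} (hV : V.IsValue) : cps V = cpsReturn (psi V) := by
  cases hV <;> rfl

theorem cps_var (n : ℕ) : cps (var n) = cpsReturn (var n) :=
  rfl

theorem cps_lam (M : Term) : cps (lam M) = cpsReturn (lam (cps M)) :=
  rfl

theorem cps_app (M N : Term) :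
    cps (app M N) = cpsSeq (cps M) (cps N) (app (app (var 1) (var 0)) (var 2)) :=
  rfl

theorem cps_choice (M N : Term) :
    cps (choice M N) = cpsSeq (cps M) (cps N)
      (app (choice (lam (app (var 0) (var 2))) (lam (app (var 0) (var 1)))) (var 2)) :=
  rfl

theorem cps_shift (M : Term) (d c : ℕ) : cps (M.shift d c) = (cps M).shift d c := by
  induction M generalizing c with
  | var n =>
    rw [cps_var, shift_cpsReturn]
    rcases lt_or_ge n c with h | h
    · rw [shift_var_of_lt h, cps_var]
    · rw [shift_var_of_le h, cps_var]
  | lam M ih => simp only [shift, cps_lam, shift_cpsReturn, ih]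
  | app M N ihM ihN => simp [shift, cps_app, shift_cpsSeq, ihM, ihN]
  | choice M N ihM ihN => simp [shift, cps_choice, shift_cpsSeq, ihM, ihN]

theorem cps_subst_var {V : Term} (hV : V.IsValue) (n j : ℕ) :
    cps ((var n).subst j V) = cpsReturn ((var n).subst j (psi V)) := by
  rcases lt_trichotomy n j with h | rfl | h
  · rw [subst_var_of_lt h, subst_var_of_lt h, cps_var]
  · rw [subst_var_self, subst_var_self, cps_shift, cps_eq_cpsReturn hV, shift_cpsReturn]
  · rw [subst_var_of_gt h, subst_var_of_gt h, cps_var]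

end CPS

/-- the call-by-value CPS translation commutes with
substitution of values: `⟨M⟩[Ψ(V)/x] = ⟨M[V/x]⟩`. -/
theorem cps_subst (M V : Term) (j : ℕ) (hV : V.IsValue) :
    (cps M).subst j (psi V) = cps (M.subst j V) := by
  induction M generalizing j with
  | var n => rw [cps_var, Term.subst_cpsReturn, cps_subst_var hV]
  | lam M ih => simp only [cps_lam, Term.subst_cpsReturn, Term.subst, ih]
  | app M N ihM ihN => simp [cps_app, Term.subst_cpsSeq, Term.subst, ihM, ihN]
  | choice M N ihM ihN => simp [cps_choice, Term.subst_cpsSeq, Term.subst, ihM, ihN]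
end

section
/- For every term M of Λ⊕ and every value K of Λ⊕⁺, ⟨M⟩K reduces to M : K by a finite sequence of deterministic call-by-name reduction steps (i.e., steps N ↦n L whose right-hand side is a one-element sequence). -/
open scoped ENNReal

/-! The terms `⟨L P⟩` and `⟨L ⊕ P⟩` have the common shape `λε.⟨L⟩(λα.⟨P⟩(λβ.B))`. Applied
to `K`, such a term β-reduces to `⟨L⟩(λα.⟨P⟩(λβ.B[K/ε]))`. If `L` is not a value, the induction
hypothesis for `L` concludes. Otherwise `⟨L⟩` passes `Ψ(L)` to its continuation, which leaves
`⟨P⟩(λβ.B[K/ε][Ψ(L)/α])`, and the same dichotomy for `P` finishes. -/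

/-- Finite sequences of deterministic call-by-name steps. -/
local infix:50 " ↦* " => Relation.ReflTransGen DetStepN

namespace Term

@[simp]
theorem shift_zero (c : ℕ) (M : Term) : shift 0 c M = M := by
  induction M generalizing c <;> simp_all [shift]

@[simp]
theorem subst_shift_succ {c d j : ℕ} (hcj : c ≤ j) (hjd : j ≤ c + d) (M N : Term) :
    (shift (d + 1) c M).subst j N = shift d c M := by
  induction M generalizing c j with
  | var n => grind [shift, subst]
  | lam M ih => simp only [shift, subst, ih (c := c + 1) (j := j + 1) (by lia) (by lia)]
  | app M L ihM ihL => simp only [shift, subst, ihM hcj hjd, ihL hcj hjd]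
  | choice M L ihM ihL => simp only [shift, subst, ihM hcj hjd, ihL hcj hjd]

end Term

open Term

theorem DetStepN.beta_of_subst_eq {M N L : Term} (h : M.subst 0 N = L) :
    DetStepN (.app (.lam M) N) L :=
  h ▸ RedN.beta

theorem colonV_of_isVal {V : Term} (hV : V.isVal) (K : Term) :
    colonV V K = .app K (psi V) := by
  cases V <;> simp_all [isVal, colonV]

theorem detStepN_cps_app_of_isVal {V : Term} (hV : V.isVal) (K : Term) :
    DetStepN (.app (cps V) K) (.app K (psi V)) := by
  cases V with
  | var | lam => exact .beta_of_subst_eq (by simp [subst, psi])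
  | app | choice => simp [isVal] at hV

/-- The continuation `λα.⟨P⟩(λβ.B)` awaiting the left operand of an application or a sum with right
operand `P`. In `B`, the indices `0` and `1` stand for `β` and `α`. -/
def cpsCont (P B : Term) : Term :=
  .lam (.app (shift 1 0 (cps P)) (.lam B))

/-- The term `λε.⟨L⟩(λα.⟨P⟩(λβ.B))`, the common shape of `⟨L P⟩` and `⟨L ⊕ P⟩`. In `B`, the indices
`0`, `1` and `2` stand for `β`, `α` and `ε`. -/
def cpsBinary (L P B : Term) : Term :=
  .lam (.app (shift 1 0 (cps L)) (.lam (.app (shift 2 0 (cps P)) (.lam B))))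

/-- The common shape of the clauses for `(L P) : K` and `(L ⊕ P) : K`. In `B`, the indices `0` and
`1` stand for `β` and `α`, and `K` has already been substituted for `ε`. -/
def colonBinary (L P B : Term) : Term :=
  if L.isVal then
    if P.isVal then (B.subst 1 (psi L)).subst 0 (psi P)
    else colonV P (.lam (B.subst 1 (psi L)))
  else colonV L (cpsCont P B)

/-- The body `αβε` of `⟨L P⟩`. -/
def cpsAppBody : Term :=
  .app (.app (.var 1) (.var 0)) (.var 2)

/-- The body `((λγ.γα) ⊕ (λγ.γβ))ε` of `⟨L ⊕ P⟩`; below the binder of `γ`, the indices of `α` and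
`β` are `2` and `1`. -/
def cpsChoiceBody : Term :=
  .app (.choice (.lam (.app (.var 0) (.var 2))) (.lam (.app (.var 0) (.var 1)))) (.var 2)

theorem cps_app_s15 (L P : Term) : cps (.app L P) = cpsBinary L P cpsAppBody :=
  rfl

theorem cps_choice_s15 (L P : Term) : cps (.choice L P) = cpsBinary L P cpsChoiceBody :=
  rfl

theorem colonV_app (L P K : Term) :
    colonV (.app L P) K = colonBinary L P (cpsAppBody.subst 2 K) := by
  simp [colonV, colonBinary, cpsCont, cpsAppBody, subst]

theorem colonV_choice (L P K : Term) :
    colonV (.choice L P) K = colonBinary L P (cpsChoiceBody.subst 2 K) := by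
  simp [colonV, colonBinary, cpsCont, cpsChoiceBody, subst]

theorem detStepN_cpsBinary_app (L P B K : Term) :
    DetStepN (.app (cpsBinary L P B) K) (.app (cps L) (cpsCont P (B.subst 2 K))) :=
  .beta_of_subst_eq (by simp [cpsCont, subst])

theorem detStepN_cpsCont_app (P B V : Term) :
    DetStepN (.app (cpsCont P B) V) (.app (cps P) (.lam (B.subst 1 V))) :=
  .beta_of_subst_eq (by simp [subst])

theorem cps_app_cpsCont_red_colonBinary {L P : Term}
    (hL : ∀ K, .app (cps L) K ↦* colonV L K) (hP : ∀ K, .app (cps P) K ↦* colonV P K)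
    (B : Term) : .app (cps L) (cpsCont P B) ↦* colonBinary L P B := by
  by_cases hLv : L.isVal
  · have pass_left_value : .app (cps L) (cpsCont P B) ↦* .app (cps P) (.lam (B.subst 1 (psi L))) :=
      .head (detStepN_cps_app_of_isVal hLv _) (.single (detStepN_cpsCont_app P B (psi L)))
    refine pass_left_value.trans ?_
    by_cases hPv : P.isVal
    · simpa [colonBinary, hLv, hPv] using
        Relation.ReflTransGen.head (detStepN_cps_app_of_isVal hPv (.lam (B.subst 1 (psi L))))
          (.single (.beta_of_subst_eq rfl))
    · simpa [colonBinary, hLv, hPv] using hP (.lam (B.subst 1 (psi L)))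
  · simpa [colonBinary, hLv] using hL (cpsCont P B)

theorem cpsBinary_app_red_colonBinary {L P : Term}
    (hL : ∀ K, .app (cps L) K ↦* colonV L K) (hP : ∀ K, .app (cps P) K ↦* colonV P K)
    (B K : Term) : .app (cpsBinary L P B) K ↦* colonBinary L P (B.subst 2 K) :=
  .head (detStepN_cpsBinary_app L P B K) (cps_app_cpsCont_red_colonBinary hL hP _)

theorem cps_app_red_colon_general (M K : Term) : .app (cps M) K ↦* colonV M K := by
  induction M generalizing K with
  | var | lam =>
    rw [colonV_of_isVal rfl]
    exact .single (detStepN_cps_app_of_isVal rfl K)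
  | app L P ihL ihP =>
    rw [cps_app_s15, colonV_app]
    exact cpsBinary_app_red_colonBinary ihL ihP _ K
  | choice L P ihL ihP =>
    rw [cps_choice_s15, colonV_choice]
    exact cpsBinary_app_red_colonBinary ihL ihP _ K

/-- `⟨M⟩K` reduces to `M : K` by a finite sequence of
deterministic call-by-name steps. -/
theorem cps_app_red_colon (M K : Term) (hK : K.IsValue) :
    Relation.ReflTransGen DetStepN (.app (cps M) K) (colonV M K) :=
  cps_app_red_colon_general M K
end
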